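/- arXiv:1802.02023 — 2 statements merged into one kernel-verified Lean document; each statement's English description precedes it below -/
import Mathlib

section
/- ∑_{(n,m)∈ℤ², (n,m)≠(0,0)} 1/(n² + m²)² = (2π²/3)·G, where G is Catalan's constant. -/
open Real

/-- Catalan's constant `G = ∑_{n=0}^∞ (−1)ⁿ/(2n+1)²`. -/
noncomputable def catalanConst : ℝ := ∑' n : ℕ, (-1 : ℝ) ^ n / (2 * (n : ℝ) + 1) ^ 2

/-!
The sum runs over the norms of the nonzero Gaussian integers, and the number `r n` of Gaussian
integers of norm `n` is `4 * ∑ d ∣ n, χ₄ d` (Jacobi). Hence it equals `4 ζ(s) L(s, χ₄)` at `s = 2`.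

For Jacobi's formula, both sides satisfy `f (p m) = (1 + χ₄ p) f m - χ₄ p f (m / p)` for every
prime `p`, with `f (m / p)` read as `0` when `p ∤ m`, and such an `f` is determined by `f 1`.
On the divisor side this splits the divisors of `p m` by divisibility by `p`. On the Gaussian side,
`r (m / p)` counts the elements of norm `p m` divisible by `p`, and the relation is
inclusion–exclusion for divisibility by the two conjugate primes above a split `p`; for an inert or
ramified `p`, every element of norm `p m` is divisible by the only prime above `p`.
-/

section HeckeRecursion

theorem sum_divisors_mul_filter_dvd {S : Type*} [NonUnitalNonAssocSemiring S] {f : ℕ → S}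
    {a : S} {p : ℕ} (hp : p ≠ 0) (hf : ∀ d, f (p * d) = a * f d) (m : ℕ) :
    ∑ d ∈ (p * m).divisors with p ∣ d, f d = a * ∑ d ∈ m.divisors, f d := by
  have himage : {d ∈ (p * m).divisors | p ∣ d} = m.divisors.image (p * ·) := by
    ext d
    simp only [Finset.mem_filter, Nat.mem_divisors, Finset.mem_image]
    constructor
    · rintro ⟨⟨hd, hpm⟩, e, rfl⟩
      exact ⟨e, ⟨Nat.dvd_of_mul_dvd_mul_left (Nat.pos_of_ne_zero hp) hd,
        right_ne_zero_of_mul hpm⟩, rfl⟩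
    · rintro ⟨e, ⟨he, hm⟩, rfl⟩
      exact ⟨⟨mul_dvd_mul_left p he, mul_ne_zero hp hm⟩, dvd_mul_right p e⟩
  rw [himage, Finset.sum_image (mul_right_injective₀ hp).injOn, Finset.mul_sum]
  exact Finset.sum_congr rfl fun d _ => hf d

variable {R : Type*} [CommRing R]

/-- The recursion at all primes satisfied by the coefficients of an Euler product with local
factors `(1 - a p * p⁻ˢ + b p * p⁻²ˢ)⁻¹`, as for a Hecke eigenform. The divisibility test encodes
the convention `f (m / p) = 0` for `p ∤ m`, since `m / p` is a truncated quotient. -/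
def IsHeckeRecursive (a b f : ℕ → R) : Prop :=
  ∀ ⦃p m : ℕ⦄, p.Prime → m ≠ 0 → f (p * m) = a p * f m - b p * if p ∣ m then f (m / p) else 0

theorem IsHeckeRecursive.eq_apply_one_mul {a b f g : ℕ → R} (hf : IsHeckeRecursive a b f)
    (hg : IsHeckeRecursive a b g) (hg_one : g 1 = 1) {n : ℕ} (hn : n ≠ 0) : f n = f 1 * g n := by
  induction n using Nat.strong_induction_on with
  | _ n ih =>
    obtain rfl | hn_one := eq_or_ne n 1
    · rw [hg_one, mul_one]
    obtain ⟨p, hp, m, rfl⟩ := Nat.exists_prime_and_dvd hn_one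
    have hm : m ≠ 0 := right_ne_zero_of_mul hn
    have hlt : m < p * m := lt_mul_left (Nat.pos_of_ne_zero hm) hp.one_lt
    rw [hf hp hm, hg hp hm, ih m hlt hm]
    split_ifs with hpm
    · have hdiv : m / p ≠ 0 := (Nat.div_pos (Nat.le_of_dvd (by omega) hpm) hp.pos).ne'
      rw [ih (m / p) ((Nat.div_le_self m p).trans_lt hlt) hdiv]
      ring
    · ring

theorem isHeckeRecursive_sum_divisors {f : ℕ → R} (hf : ∀ m n, f (m * n) = f m * f n) :
    IsHeckeRecursive (fun p => 1 + f p) f (fun n => ∑ d ∈ n.divisors, f d) := by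
  intro p m hp hm
  have hcoprime : {d ∈ (p * m).divisors | ¬p ∣ d} = {d ∈ m.divisors | ¬p ∣ d} := by
    ext d
    simp only [Finset.mem_filter, Nat.mem_divisors, and_congr_left_iff]
    intro hpd
    have hd : d.Coprime p := ((Nat.Prime.coprime_iff_not_dvd hp).2 hpd).symm
    simp only [ne_eq, mul_eq_zero, hp.ne_zero, hm, or_self, not_false_eq_true, and_true]
    exact hd.dvd_mul_left
  have hdvd : ∑ d ∈ m.divisors with p ∣ d, f d =
      f p * if p ∣ m then ∑ d ∈ (m / p).divisors, f d else 0 := by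
    split_ifs with hpm
    · rw [← sum_divisors_mul_filter_dvd hp.ne_zero (hf p), Nat.mul_div_cancel' hpm]
    · rw [mul_zero, Finset.filter_false_of_mem, Finset.sum_empty]
      exact fun d hd hpd => hpm (hpd.trans (Nat.dvd_of_mem_divisors hd))
  have hsplit_mul := (p * m).divisors.sum_filter_add_sum_filter_not (p ∣ ·) f
  have hsplit := m.divisors.sum_filter_add_sum_filter_not (p ∣ ·) f
  rw [sum_divisors_mul_filter_dvd hp.ne_zero (hf p), hcoprime] at hsplit_mul
  rw [hdvd] at hsplit
  linear_combination hsplit - hsplit_mul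

end HeckeRecursion

section NormFiber

variable {d : ℤ}

/-- The set of elements of norm `n` in the quadratic order `ℤ√d`; for `d = -1` its cardinality is
the number of representations of `n` as a sum of two squares. -/
def normFiber (d n : ℤ) : Set (ℤ√d) := {z | z.norm = n}

theorem finite_normFiber (hd : d < 0) (n : ℤ) : (normFiber d n).Finite := by
  have hbox : (Set.Icc (-n) n ×ˢ Set.Icc (-n) n).Finite :=
    (Set.finite_Icc _ _).prod (Set.finite_Icc _ _)
  refine (hbox.image fun q => (⟨q.1, q.2⟩ : ℤ√d)).subset fun z hz => ⟨(z.re, z.im), ?_, rfl⟩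
  have hz : z.re * z.re - d * z.im * z.im = n := hz
  have hsq : z.re ^ 2 + z.im ^ 2 ≤ n := by nlinarith [mul_self_nonneg z.im]
  simp only [Set.mem_prod, Set.mem_Icc]
  refine ⟨⟨?_, ?_⟩, ?_, ?_⟩ <;> nlinarith

theorem mul_right_injective_of_norm_ne_zero {w : ℤ√d} (hw : w.norm ≠ 0) :
    Function.Injective (w * ·) := by
  intro x y hxy
  refine Zsqrtd.eq_of_smul_eq_smul_left hw ?_
  rw [Zsqrtd.norm_eq_mul_conj]
  linear_combination star w * hxy

theorem ncard_normFiber_mul_dvd {w : ℤ√d} (hw : w.norm ≠ 0) (m : ℤ) :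
    {z ∈ normFiber d (w.norm * m) | w ∣ z}.ncard = (normFiber d m).ncard := by
  have himage : {z ∈ normFiber d (w.norm * m) | w ∣ z} = (w * ·) '' normFiber d m := by
    ext z
    constructor
    · rintro ⟨hz, u, rfl⟩
      refine ⟨u, mul_left_cancel₀ hw ?_, rfl⟩
      rw [← Zsqrtd.norm_mul, hz]
    · rintro ⟨u, hu, rfl⟩
      exact ⟨(Zsqrtd.norm_mul w u).trans (congrArg _ hu), dvd_mul_right w u⟩
  rw [himage, Set.ncard_image_of_injective _ (mul_right_injective_of_norm_ne_zero hw)]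

theorem ncard_normFiber_mul_intCast_dvd {p : ℤ} (hp : p ≠ 0) (m : ℤ) :
    {z ∈ normFiber d (p * m) | (p : ℤ√d) ∣ z}.ncard =
      if p ∣ m then (normFiber d (m / p)).ncard else 0 := by
  have hnorm : (p : ℤ√d).norm = p * p := Zsqrtd.norm_intCast p
  split_ifs with hpm
  · obtain ⟨k, rfl⟩ := hpm
    rw [Int.mul_ediv_cancel_left k hp, ← mul_assoc, ← hnorm]
    exact ncard_normFiber_mul_dvd (by simp [hnorm, hp]) k
  · suffices {z ∈ normFiber d (p * m) | (p : ℤ√d) ∣ z} = ∅ by rw [this, Set.ncard_empty]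
    refine Set.eq_empty_of_forall_notMem ?_
    rintro _ ⟨hz, u, rfl⟩
    refine hpm ⟨u.norm, mul_left_cancel₀ hp ?_⟩
    rw [← mul_assoc, ← hnorm, ← Zsqrtd.norm_mul, hz]

theorem dvd_star_iff {S : Type*} [CommSemigroup S] [StarMul S] {w z : S} :
    w ∣ star z ↔ star w ∣ z := by
  constructor
  · rintro ⟨u, hu⟩
    exact ⟨star u, by rw [← star_mul', ← hu, star_star]⟩
  · rintro ⟨u, rfl⟩
    exact ⟨star u, by rw [star_mul', star_star]⟩

theorem dvd_or_star_dvd_of_dvd_norm {w : ℤ√d} (hw : Prime w) {z : ℤ√d}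
    (h : w ∣ (z.norm : ℤ√d)) : w ∣ z ∨ star w ∣ z := by
  rw [Zsqrtd.norm_eq_mul_conj] at h
  exact (hw.dvd_or_dvd h).imp_right dvd_star_iff.1

theorem dvd_or_star_dvd_of_mem_normFiber_mul {w : ℤ√d} (hw : Prime w) {m : ℤ} {z : ℤ√d}
    (hz : z ∈ normFiber d (w.norm * m)) : w ∣ z ∨ star w ∣ z := by
  refine dvd_or_star_dvd_of_dvd_norm hw ?_
  rw [show z.norm = w.norm * m from hz, Int.cast_mul, Zsqrtd.norm_eq_mul_conj, mul_assoc]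
  exact dvd_mul_right _ _

theorem ncard_normFiber_mul_of_star_dvd {w : ℤ√d} (hw : Prime w) (hnorm : w.norm ≠ 0)
    (hstar : star w ∣ w) (m : ℤ) : (normFiber d (w.norm * m)).ncard = (normFiber d m).ncard := by
  rw [← ncard_normFiber_mul_dvd hnorm m]
  congr 1
  ext z
  refine ⟨fun hz => ⟨hz, ?_⟩, And.left⟩
  exact (dvd_or_star_dvd_of_mem_normFiber_mul hw hz).elim id
    (dvd_trans (dvd_star_iff.2 hstar))

theorem ncard_normFiber_mul_of_not_star_dvd (hd : d < 0) {w : ℤ√d} (hw : Prime w)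
    (hstar : ¬star w ∣ w) (m : ℤ) :
    (normFiber d (w.norm * m)).ncard +
        {z ∈ normFiber d (w.norm * m) | (w.norm : ℤ√d) ∣ z}.ncard =
      2 * (normFiber d m).ncard := by
  have hnorm : w.norm ≠ 0 := (Zsqrtd.norm_eq_zero_iff hd w).not.2 hw.ne_zero
  have hunion : normFiber d (w.norm * m) = {z ∈ normFiber d (w.norm * m) | w ∣ z} ∪
      {z ∈ normFiber d (w.norm * m) | star w ∣ z} := by
    ext z
    simp only [Set.mem_union, Set.mem_ofPred_eq, ← and_or_left]
    exact ⟨fun hz => ⟨hz, dvd_or_star_dvd_of_mem_normFiber_mul hw hz⟩, And.left⟩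
  have hinter : {z ∈ normFiber d (w.norm * m) | (w.norm : ℤ√d) ∣ z} =
      {z ∈ normFiber d (w.norm * m) | w ∣ z} ∩
        {z ∈ normFiber d (w.norm * m) | star w ∣ z} := by
    ext z
    rw [Zsqrtd.norm_eq_mul_conj]
    constructor
    · rintro ⟨hz, h⟩
      exact ⟨⟨hz, dvd_of_mul_right_dvd h⟩, hz, dvd_of_mul_left_dvd h⟩
    · rintro ⟨⟨hz, hwz⟩, -, u, rfl⟩
      refine ⟨hz, ?_⟩
      rw [mul_comm w]
      exact mul_dvd_mul_left _ ((hw.dvd_or_dvd hwz).resolve_left fun h =>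
        hstar (dvd_star_iff.1 h))
  have hfinite (v : ℤ√d) : {z ∈ normFiber d (w.norm * m) | v ∣ z}.Finite :=
    (finite_normFiber hd _).subset fun _ => And.left
  have hcount_star : {z ∈ normFiber d (w.norm * m) | star w ∣ z}.ncard =
      (normFiber d m).ncard := by
    rw [← ncard_normFiber_mul_dvd (w := star w) (by rwa [Zsqrtd.norm_conj]), Zsqrtd.norm_conj]
  rw [hinter, congrArg Set.ncard hunion,
    Set.ncard_union_add_ncard_inter _ _ (hfinite w) (hfinite (star w)),
    ncard_normFiber_mul_dvd hnorm, hcount_star, two_mul]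

theorem irreducible_of_prime_norm {w : ℤ√d} (hw : Prime w.norm) : Irreducible w :=
  have : IsLocalHom (Zsqrtd.normMonoidHom (d := d)) :=
    ⟨fun z hz => (Zsqrtd.isUnit_iff_norm_isUnit z).2 hz⟩
  Irreducible.of_map (f := Zsqrtd.normMonoidHom (d := d)) hw.irreducible

end NormFiber

section GaussianInt

theorem gaussianInt_norm_eq_sq_add_sq (z : GaussianInt) : z.norm = z.re ^ 2 + z.im ^ 2 := by
  rw [Zsqrtd.norm_def]
  ring

theorem gaussianInt_prime_of_prime_norm {w : GaussianInt} (hw : Prime w.norm) : Prime w :=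
  (irreducible_of_prime_norm hw).prime

theorem ncard_normFiber_one : (normFiber (-1) 1).ncard = 4 := by
  have hunits : normFiber (-1) 1 =
      (({⟨1, 0⟩, ⟨-1, 0⟩, ⟨0, 1⟩, ⟨0, -1⟩} : Finset GaussianInt) : Set GaussianInt) := by
    ext ⟨a, b⟩
    simp only [normFiber, Set.mem_ofPred_eq, gaussianInt_norm_eq_sq_add_sq, Finset.coe_insert,
      Finset.coe_singleton, Set.mem_insert_iff, Set.mem_singleton_iff, Zsqrtd.ext_iff]
    constructor
    · intro h
      obtain ⟨ha_ge, ha_le⟩ : -1 ≤ a ∧ a ≤ 1 := ⟨by nlinarith, by nlinarith⟩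
      obtain ⟨hb_ge, hb_le⟩ : -1 ≤ b ∧ b ≤ 1 := ⟨by nlinarith, by nlinarith⟩
      interval_cases a <;> interval_cases b <;> simp_all
    · rintro (h | h | h | h) <;> simp [h.1, h.2]
  rw [hunits, Set.ncard_coe_finset]
  decide

theorem ncard_normFiber_two_mul (m : ℤ) :
    (normFiber (-1) (2 * m)).ncard = (normFiber (-1) m).ncard := by
  have hnorm : (⟨1, 1⟩ : GaussianInt).norm = 2 := rfl
  have hprime : Prime (⟨1, 1⟩ : GaussianInt) := gaussianInt_prime_of_prime_norm Int.prime_two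
  exact hnorm ▸ ncard_normFiber_mul_of_star_dvd hprime (by simp [hnorm]) ⟨⟨0, 1⟩, rfl⟩ m

theorem not_star_dvd_self_of_prime_norm {w : GaussianInt} (hw : Prime w.norm)
    (hodd : ¬w.norm ∣ 2) : ¬star w ∣ w := by
  intro h
  have htrace : star w ∣ ((2 * w.re : ℤ) : GaussianInt) := by
    have : ((2 * w.re : ℤ) : GaussianInt) = w + star w := by ext <;> simp [two_mul]
    exact this ▸ dvd_add h dvd_rfl
  have hre : w.norm ∣ w.re := by
    have hdvd : w.norm ∣ 2 * w.re * (2 * w.re) := by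
      rw [← Zsqrtd.norm_intCast (d := -1), ← Zsqrtd.norm_conj]
      exact map_dvd Zsqrtd.normMonoidHom htrace
    exact (hw.dvd_or_dvd ((hw.dvd_or_dvd hdvd).elim id id)).resolve_left hodd
  have him : w.norm ∣ w.im := by
    refine hw.dvd_of_dvd_pow (n := 2) ((dvd_add_right (dvd_pow hre two_ne_zero)).1 ?_)
    rw [← gaussianInt_norm_eq_sq_add_sq]
  have hsq : w.norm * w.norm ∣ w.norm := by
    conv_rhs => rw [gaussianInt_norm_eq_sq_add_sq, sq, sq]
    exact dvd_add (mul_dvd_mul hre hre) (mul_dvd_mul him him)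
  exact hw.not_isUnit (isUnit_of_dvd_one ((mul_dvd_mul_iff_left hw.ne_zero).1 (by simpa using hsq)))

variable {p : ℕ}

theorem ncard_normFiber_mul_of_mod_four_eq_three (hp : p.Prime) (hp3 : p % 4 = 3) (m : ℤ) :
    (normFiber (-1) (p * m)).ncard =
      {z ∈ normFiber (-1) (p * m) | ((p : ℤ) : GaussianInt) ∣ z}.ncard := by
  have := Fact.mk hp
  have hprime : Prime ((p : ℤ) : GaussianInt) := by
    simpa using GaussianInt.prime_of_nat_prime_of_mod_four_eq_three p hp3
  congr 1
  ext z
  refine ⟨fun hz => ⟨hz, ?_⟩, And.left⟩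
  have hdvd : ((p : ℤ) : GaussianInt) ∣ (z.norm : GaussianInt) := by
    rw [show z.norm = p * m from hz, Int.cast_mul]
    exact dvd_mul_right _ _
  exact (dvd_or_star_dvd_of_dvd_norm hprime hdvd).elim id (by simp)

theorem ncard_normFiber_mul_of_mod_four_eq_one (hp : p.Prime) (hp1 : p % 4 = 1) (m : ℤ) :
    (normFiber (-1) (p * m)).ncard +
        {z ∈ normFiber (-1) (p * m) | ((p : ℤ) : GaussianInt) ∣ z}.ncard =
      2 * (normFiber (-1) m).ncard := by
  have := Fact.mk hp
  obtain ⟨a, b, hab⟩ := Nat.Prime.sq_add_sq (p := p) (by omega)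
  have hnorm : (⟨a, b⟩ : GaussianInt).norm = p := by
    rw [gaussianInt_norm_eq_sq_add_sq, ← hab]
    push_cast
    rfl
  have hprime : Prime (⟨a, b⟩ : GaussianInt).norm := hnorm ▸ Nat.prime_iff_prime_int.1 hp
  have hodd : ¬(⟨a, b⟩ : GaussianInt).norm ∣ 2 := by
    rw [hnorm]
    intro h
    have := (Nat.prime_dvd_prime_iff_eq hp Nat.prime_two).1 (by exact_mod_cast h)
    omega
  exact hnorm ▸ ncard_normFiber_mul_of_not_star_dvd (by decide)
    (gaussianInt_prime_of_prime_norm hprime) (not_star_dvd_self_of_prime_norm hprime hodd) m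

theorem ncard_normFiber_prime_mul_add (hp : p.Prime) (m : ℤ) :
    ((normFiber (-1) (p * m)).ncard +
        ZMod.χ₄ p * {z ∈ normFiber (-1) (p * m) | ((p : ℤ) : GaussianInt) ∣ z}.ncard : ℤ) =
      (1 + ZMod.χ₄ p) * (normFiber (-1) m).ncard := by
  obtain rfl | hp_odd := hp.eq_two_or_odd
  · have hχ : ZMod.χ₄ ((2 : ℕ) : ZMod 4) = 0 := by decide
    have hcount : (normFiber (-1) ((2 : ℕ) * m)).ncard = (normFiber (-1) m).ncard :=
      ncard_normFiber_two_mul m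
    rw [hχ, hcount]
    ring
  obtain hp1 | hp3 := Nat.odd_mod_four_iff.1 hp_odd
  · have hcount := ncard_normFiber_mul_of_mod_four_eq_one hp hp1 m
    rw [ZMod.χ₄_nat_one_mod_four hp1]
    zify at hcount
    linear_combination hcount
  · rw [ZMod.χ₄_nat_three_mod_four hp3, ← ncard_normFiber_mul_of_mod_four_eq_three hp hp3]
    ring

theorem isHeckeRecursive_ncard_normFiber :
    IsHeckeRecursive (fun p => 1 + ZMod.χ₄ p) (fun p => ZMod.χ₄ p)
      (fun n => ((normFiber (-1) n).ncard : ℤ)) := by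
  intro p m hp _
  have hp_ne : (p : ℤ) ≠ 0 := by exact_mod_cast hp.ne_zero
  have hrec := ncard_normFiber_prime_mul_add hp m
  rw [ncard_normFiber_mul_intCast_dvd hp_ne] at hrec
  simp only [Int.natCast_dvd_natCast, Nat.cast_ite, Nat.cast_zero] at hrec
  push_cast
  linear_combination hrec

/-- Jacobi's two-square theorem. -/
theorem ncard_normFiber_eq_four_mul_sum_divisors {n : ℕ} (hn : n ≠ 0) :
    ((normFiber (-1) n).ncard : ℤ) = 4 * ∑ d ∈ n.divisors, ZMod.χ₄ d := by
  have hdivisors : IsHeckeRecursive (fun p => 1 + ZMod.χ₄ p) (fun p => ZMod.χ₄ p)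
      (fun n => ∑ d ∈ n.divisors, ZMod.χ₄ d) :=
    isHeckeRecursive_sum_divisors (f := fun d : ℕ => ZMod.χ₄ d) fun m n => by
      rw [Nat.cast_mul, map_mul]
  have hone : ((normFiber (-1) (1 : ℕ)).ncard : ℤ) = 4 := by
    rw [Nat.cast_one, ncard_normFiber_one, Nat.cast_ofNat]
  have h := isHeckeRecursive_ncard_normFiber.eq_apply_one_mul hdivisors (by simp) hn
  rwa [hone] at h

end GaussianInt

section LSeries

theorem LSeries_zetaMul {N : ℕ} (χ : DirichletCharacter ℂ N) {s : ℂ} (hs : 1 < s.re) :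
    LSeries χ.zetaMul s = riemannZeta s * LSeries (χ ·) s := by
  have hζ : LSeriesSummable (fun n => (ArithmeticFunction.zeta : ArithmeticFunction ℂ) n) s :=
    ArithmeticFunction.LSeriesSummable_zeta_iff.2 hs
  have hχ : LSeriesSummable (toArithmeticFunction (χ ·)) s :=
    (LSeriesSummable_congr s fun h => (χ.apply_eq_toArithmeticFunction_apply h).symm).2
      (χ.LSeriesSummable_of_one_lt_re hs)
  rw [DirichletCharacter.zetaMul, ArithmeticFunction.LSeries_mul' hζ hχ,
    LSeries_congr χ.apply_eq_toArithmeticFunction_apply,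
    ← ArithmeticFunction.LSeries_zeta_eq_riemannZeta hs]
  rfl

/-- The nontrivial Dirichlet character modulo `4`, with complex values, as required by `LSeries`. -/
noncomputable def complexChi₄ : DirichletCharacter ℂ 4 :=
  ZMod.χ₄.ringHomComp (Int.castRingHom ℂ)

theorem complexChi₄_natCast (n : ℕ) : complexChi₄ n = (ZMod.χ₄ n : ℂ) := rfl

theorem LSeries_complexChi₄_eq_tsum (s : ℂ) :
    LSeries (complexChi₄ ·) s = ∑' k : ℕ, (-1) ^ k / (2 * k + 1 : ℂ) ^ s := by
  have hodd : Function.Injective fun k : ℕ => 2 * k + 1 := fun _ _ h => by simpa using h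
  have hsupport : Function.support (LSeries.term (complexChi₄ ·) s) ⊆
      Set.range fun k : ℕ => 2 * k + 1 := by
    intro n hn
    by_contra hn_even
    have hmod : n % 2 = 0 := by
      by_contra h
      exact hn_even ⟨n / 2, by dsimp only; omega⟩
    refine hn ?_
    rw [LSeries.term_def, complexChi₄_natCast, ZMod.χ₄_nat_eq_if_mod_four, if_pos hmod]
    simp
  rw [LSeries, ← hodd.tsum_eq hsupport]
  refine tsum_congr fun k => ?_
  rw [LSeries.term_of_ne_zero (by omega), complexChi₄_natCast,
    ZMod.χ₄_eq_neg_one_pow (by omega), show (2 * k + 1) / 2 = k by omega]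
  push_cast
  rfl

theorem LSeries_complexChi₄_two : LSeries (complexChi₄ ·) 2 = catalanConst := by
  rw [LSeries_complexChi₄_eq_tsum, catalanConst, Complex.ofReal_tsum]
  refine tsum_congr fun k => ?_
  rw [Complex.cpow_ofNat]
  push_cast
  rfl

theorem LSeriesHasSum_ncard_normFiber {s : ℂ} (hs : 1 < s.re) :
    LSeriesHasSum (fun n => ((normFiber (-1) n).ncard : ℂ)) s
      (4 * (riemannZeta s * LSeries (complexChi₄ ·) s)) := by
  have hsum := (complexChi₄.LSeriesSummable_zetaMul hs).LSeriesHasSum.smul 4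
  rw [LSeries_zetaMul complexChi₄ hs] at hsum
  refine (LSeriesHasSum_congr s _ fun {n} hn => ?_).1 hsum
  have hcoeff : complexChi₄.zetaMul n = ∑ d ∈ n.divisors, (ZMod.χ₄ d : ℂ) := by
    rw [DirichletCharacter.zetaMul, ArithmeticFunction.coe_zeta_mul_apply]
    refine Finset.sum_congr rfl fun d hd => ?_
    exact (complexChi₄.apply_eq_toArithmeticFunction_apply
      (Nat.pos_of_mem_divisors hd).ne').symm
  rw [Pi.smul_apply, hcoeff, smul_eq_mul]
  exact_mod_cast (ncard_normFiber_eq_four_mul_sum_divisors hn).symm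

end LSeries

section LatticeSum

variable {α β : Type*} {f : α → β}

theorem hasSum_fiber_of_finite {M : Type*} [AddCommMonoid M] [TopologicalSpace M] {b : β}
    (hb : (f ⁻¹' {b}).Finite) (g : β → M) :
    HasSum (fun x : {x // f x = b} => g (f x)) ((f ⁻¹' {b}).ncard • g b) := by
  have : Fintype {x // f x = b} := hb.fintype
  convert! hasSum_fintype _ using 1
  rw [Finset.sum_congr rfl fun x _ => congrArg g x.2, Finset.sum_const, Finset.card_univ,
    ← Nat.card_eq_fintype_card, ← Nat.card_coe_set_eq]
  rfl

theorem hasSum_comp_of_finite_fibers {E : Type*} [NormedAddCommGroup E] [CompleteSpace E]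
    (hf : ∀ b, (f ⁻¹' {b}).Finite) {g : β → E} {a : E}
    (hsummable : Summable fun b => ((f ⁻¹' {b}).ncard : ℝ) * ‖g b‖)
    (hsum : HasSum (fun b => (f ⁻¹' {b}).ncard • g b) a) : HasSum (g ∘ f) a := by
  have hnorm (b : β) := hasSum_fiber_of_finite (hf b) (‖g ·‖)
  rw [← (Equiv.sigmaFiberEquiv f).hasSum_iff]
  refine HasSum.sigma_of_hasSum hsum (fun b => hasSum_fiber_of_finite (hf b) g) (.of_norm ?_)
  refine (summable_sigma_of_nonneg fun _ => norm_nonneg _).2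
    ⟨fun b => (hnorm b).summable, hsummable.congr fun b => ?_⟩
  rw [← nsmul_eq_mul]
  exact (hnorm b).tsum_eq.symm

theorem preimage_natAbs_norm_eq_normFiber (n : ℕ) :
    (fun z : GaussianInt => z.norm.natAbs) ⁻¹' {n} = normFiber (-1) n := by
  ext z
  rw [Set.mem_preimage, Set.mem_singleton_iff, ← Int.natCast_inj, GaussianInt.abs_natCast_norm]
  rfl

/-- The Epstein zeta function of the square lattice, i.e. four times the Dedekind zeta function of
`ℚ(i)`. The term at `z = 0` is `(0 ^ s)⁻¹ = 0`. -/
theorem hasSum_inv_norm_cpow {s : ℂ} (hs : 1 < s.re) :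
    HasSum (fun z : GaussianInt => ((z.norm : ℂ) ^ s)⁻¹)
      (4 * (riemannZeta s * LSeries (complexChi₄ ·) s)) := by
  have hs_ne : s ≠ 0 := by
    rintro rfl
    norm_num at hs
  have hterm : LSeries.term (fun n => ((normFiber (-1) n).ncard : ℂ)) s =
      fun n : ℕ => ((normFiber (-1) n).ncard : ℂ) * ((n : ℂ) ^ s)⁻¹ := by
    ext n
    obtain rfl | hn := eq_or_ne n 0
    · simp [hs_ne]
    · rw [LSeries.term_of_ne_zero hn, div_eq_mul_inv]
  have hsum : HasSum _ _ := LSeriesHasSum_ncard_normFiber hs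
  rw [hterm] at hsum
  have hnorm : (fun z : GaussianInt => ((z.norm : ℂ) ^ s)⁻¹) =
      (fun n : ℕ => ((n : ℂ) ^ s)⁻¹) ∘ fun z : GaussianInt => z.norm.natAbs := by
    ext z
    rw [Function.comp_apply, GaussianInt.natCast_natAbs_norm]
  rw [hnorm]
  refine hasSum_comp_of_finite_fibers (fun n => ?_) ?_ ?_
  · rw [preimage_natAbs_norm_eq_normFiber]
    exact finite_normFiber (by decide) n
  · simpa [preimage_natAbs_norm_eq_normFiber] using hsum.summable.norm
  · simpa only [preimage_natAbs_norm_eq_normFiber, nsmul_eq_mul] using hsum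

theorem hasSum_inv_sq_add_sq_sq :
    HasSum (fun q : ℤ × ℤ => (((q.1 : ℝ) ^ 2 + (q.2 : ℝ) ^ 2) ^ 2)⁻¹)
      (2 * π ^ 2 / 3 * catalanConst) := by
  let e : ℤ × ℤ ≃ GaussianInt :=
    ⟨fun q => ⟨q.1, q.2⟩, fun z => (z.re, z.im), fun _ => rfl, fun _ => rfl⟩
  have hsum := e.hasSum_iff.2 (hasSum_inv_norm_cpow (s := 2) (by norm_num))
  rw [riemannZeta_two, LSeries_complexChi₄_two] at hsum
  rw [← Complex.hasSum_ofReal]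
  convert! hsum using 1
  · ext q
    rw [Function.comp_apply, gaussianInt_norm_eq_sq_add_sq, Complex.cpow_ofNat]
    push_cast
    rfl
  · push_cast
    ring

end LatticeSum

theorem stmt_15 :
    ∑' p : {p : ℤ × ℤ // p ≠ 0},
        ((((p : ℤ × ℤ).1 : ℝ) ^ 2 + ((p : ℤ × ℤ).2 : ℝ) ^ 2) ^ 2)⁻¹ =
      2 * π ^ 2 / 3 * catalanConst := by
  rw [← hasSum_inv_sq_add_sq_sq.tsum_eq]
  refine tsum_subtype_eq_of_support_subset (s := {q : ℤ × ℤ | q ≠ 0})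
    (f := fun q : ℤ × ℤ => (((q.1 : ℝ) ^ 2 + (q.2 : ℝ) ^ 2) ^ 2)⁻¹) ?_
  rintro q hq rfl
  exact hq (by simp)
end

section
/- For every real q ∈ (0,1): E₄(q)³ − E₆(q)² = 1728 · q · ∏_{n=1}^∞ (1 − qⁿ)²⁴. Equivalently, √(E₄(q)³ − 1728·η(q)²⁴) = E₆(q) whenever E₆(q) ≥ 0, where η(q) = q^{1/24}∏_{n=1}^∞(1 − qⁿ). -/
open Real

/-- `σ₃(n)`, the sum of the cubes of the positive divisors of `n`. -/
def sigma3 (n : ℕ) : ℕ := ∑ d ∈ n.divisors, d ^ 3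

/-- `σ₅(n)`, the sum of the fifth powers of the positive divisors of `n`. -/
def sigma5 (n : ℕ) : ℕ := ∑ d ∈ n.divisors, d ^ 5

/-- The Eisenstein series `E₄(q) = 1 + 240·∑_{n=1}^∞ σ₃(n) qⁿ`. -/
noncomputable def E4 (q : ℝ) : ℝ := 1 + 240 * ∑' n : ℕ, (sigma3 (n + 1) : ℝ) * q ^ (n + 1)

/-- The Eisenstein series `E₆(q) = 1 − 504·∑_{n=1}^∞ σ₅(n) qⁿ`. -/
noncomputable def E6 (q : ℝ) : ℝ := 1 - 504 * ∑' n : ℕ, (sigma5 (n + 1) : ℝ) * q ^ (n + 1)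

/-- The Dedekind eta q-series `η(q) = q^{1/24} · ∏_{n=1}^∞ (1 − qⁿ)`. -/
noncomputable def etaQ (q : ℝ) : ℝ := q ^ ((1 : ℝ) / 24) * ∏' n : ℕ, (1 - q ^ (n + 1))

/-!
For `0 < |q| < 1`, write `q = e^{2πiz}` with `z` in the upper half-plane (of real part `1/2` when
`q < 0`). Then `E4 q`, `E6 q` and `q ∏ (1 - qⁿ)²⁴` are the values at `z` of the modular forms `E₄`,
`E₆` and `Δ`. Since `E₄³ - E₆²` is a level one cusp form of weight `12`, it is a multiple of `Δ`,
and comparing coefficients of `q` gives the factor `1728`.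
-/

open UpperHalfPlane EisensteinSeries

open scoped ArithmeticFunction.sigma

local notation "𝕢" => Function.Periodic.qParam

theorem exists_qParam_eq {h : ℝ} (hh : 0 < h) {q : ℂ} (hq₀ : q ≠ 0) (hq₁ : ‖q‖ < 1) :
    ∃ z : ℍ, 𝕢 h z = q :=
  ⟨⟨_, Function.Periodic.im_invQParam_pos_of_norm_lt_one hh hq₁ hq₀⟩,
    Function.Periodic.qParam_right_inv hh.ne' hq₀⟩

theorem ofReal_tprod {ι : Type*} (f : ι → ℝ) : ((∏' i, f i : ℝ) : ℂ) = ∏' i, (f i : ℂ) :=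
  Function.LeftInverse.map_tprod (g := Complex.ofRealHom) f Complex.continuous_ofReal
    Complex.continuous_re Complex.ofReal_re

theorem bernoulli_four : bernoulli 4 = -1 / 30 := by
  rw [bernoulli_eq_bernoulli'_of_ne_one (by norm_num), bernoulli'_four]

theorem bernoulli_six : bernoulli 6 = 1 / 42 := by
  have bernoulli'_five : bernoulli' 5 = 0 := bernoulli'_eq_zero_of_odd (by decide) (by norm_num)
  rw [bernoulli_eq_bernoulli'_of_ne_one (by norm_num), bernoulli'_def]
  norm_num [Finset.sum_range_succ, Nat.choose, bernoulli'_five]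

theorem E_eq_one_sub_tsum_qParam {k : ℕ} (hk : 3 ≤ k) (hk_even : Even k) (z : ℍ) :
    ModularForm.E hk z =
      1 - 2 * k / bernoulli k * ∑' n : ℕ, (σ (k - 1) (n + 1) : ℂ) * 𝕢 1 z ^ (n + 1) := by
  rw [q_expansion_bernoulli hk hk_even,
    ← tsum_pnat_eq_tsum_succ (f := fun n ↦ (σ (k - 1) n : ℂ) * 𝕢 1 z ^ n)]
  simp only [Function.Periodic.qParam, Complex.ofReal_one, div_one, zpow_natCast]

theorem E4_eq_E₄_of_qParam_eq {q : ℝ} {z : ℍ} (hz : 𝕢 1 z = q) :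
    (E4 q : ℂ) = ModularForm.E₄ z := by
  rw [ModularForm.E₄, E_eq_one_sub_tsum_qParam _ (by decide), hz, bernoulli_four, E4]
  push_cast [sigma3, ArithmeticFunction.sigma_apply]
  ring

theorem E6_eq_E₆_of_qParam_eq {q : ℝ} {z : ℍ} (hz : 𝕢 1 z = q) :
    (E6 q : ℂ) = ModularForm.E₆ z := by
  rw [ModularForm.E₆, E_eq_one_sub_tsum_qParam _ (by decide), hz, bernoulli_six, E6]
  push_cast [sigma5, ArithmeticFunction.sigma_apply]
  ring

theorem discriminant_eq_qParam_mul_tprod_pow (z : ℍ) :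
    ModularForm.discriminant z = 𝕢 1 z * (∏' n : ℕ, (1 - 𝕢 1 z ^ (n + 1))) ^ 24 := by
  have h_mult : Multipliable fun n : ℕ ↦ 1 - 𝕢 1 z ^ (n + 1) :=
    ModularForm.multipliable_one_sub_pow (Function.Periodic.norm_qParam_lt_one one_pos z.im_pos)
  rw [ModularForm.discriminant_eq_q_prod, h_mult.tprod_pow]

theorem E4_cube_sub_E6_sq {q : ℝ} (hq : |q| < 1) :
    E4 q ^ 3 - E6 q ^ 2 = 1728 * q * (∏' n : ℕ, (1 - q ^ (n + 1))) ^ 24 := by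
  rcases eq_or_ne q 0 with rfl | hq₀
  · simp [E4, E6]
  obtain ⟨z, hz⟩ : ∃ z : ℍ, 𝕢 1 z = q :=
    exists_qParam_eq one_pos (Complex.ofReal_ne_zero.mpr hq₀) (by simpa using hq)
  have h_disc := ModularForm.discriminant_eq_E₄_cube_sub_E₆_sq z
  rw [discriminant_eq_qParam_mul_tprod_pow, hz, ← E4_eq_E₄_of_qParam_eq hz,
    ← E6_eq_E₆_of_qParam_eq hz] at h_disc
  apply Complex.ofReal_injective
  push_cast [ofReal_tprod]
  linear_combination -1728 * h_disc

theorem etaQ_pow_twentyFour {q : ℝ} (hq : 0 ≤ q) :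
    etaQ q ^ 24 = q * (∏' n : ℕ, (1 - q ^ (n + 1))) ^ 24 := by
  have h_root : (q ^ ((1 : ℝ) / 24)) ^ 24 = q := by
    simpa using rpow_inv_natCast_pow hq (n := 24) (by norm_num)
  rw [etaQ, mul_pow, h_root]

theorem stmt_17_general {q : ℝ} (hq : |q| < 1) :
    E4 q ^ 3 - E6 q ^ 2 = 1728 * q * (∏' n : ℕ, (1 - q ^ (n + 1))) ^ 24 ∧
      (0 ≤ q → √(E4 q ^ 3 - 1728 * etaQ q ^ 24) = |E6 q|) := by
  refine ⟨E4_cube_sub_E6_sq hq, fun hq₀ ↦ ?_⟩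
  have h_sq : E4 q ^ 3 - 1728 * etaQ q ^ 24 = E6 q ^ 2 := by
    rw [etaQ_pow_twentyFour hq₀]
    linear_combination E4_cube_sub_E6_sq hq
  rw [h_sq, sqrt_sq_eq_abs]

theorem stmt_17 :
    ∀ q ∈ Set.Ioo (0 : ℝ) 1,
      E4 q ^ 3 - E6 q ^ 2 = 1728 * q * (∏' n : ℕ, (1 - q ^ (n + 1))) ^ 24 ∧
      (0 ≤ E6 q → Real.sqrt (E4 q ^ 3 - 1728 * etaQ q ^ 24) = E6 q) := by
  intro q hq
  obtain ⟨h_sub, h_sqrt⟩ := stmt_17_general (abs_lt.mpr ⟨by linarith [hq.1], hq.2⟩)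
  exact ⟨h_sub, fun hE6 ↦ (h_sqrt hq.1.le).trans (abs_of_nonneg hE6)⟩
end
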